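/- arXiv:1201.2586 — 2 statements merged into one kernel-verified Lean document; each statement's English description precedes it below -/
import Mathlib

section
/- Let F be a closed subset of a metrizable space X, and let 𝒰 = {U_α | α ∈ A} be a locally finite cover of F by sets open in F. Then there exists a locally finite family 𝒱 = {V_α | α ∈ A} of open subsets of X such that V_α ∩ F = U_α for every α ∈ A and the nerves of 𝒰 and 𝒱 are naturally isomorphic, i.e. for every nonempty finite subset s ⊆ A, ⋂_{α∈s} U_α ≠ ∅ if and only if ⋂_{α∈s} V_α ≠ ∅. -/
/-!
Fix a metric on `X` and extend a set `S ⊆ F` open in `F` to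
`e(S) = {x | d(x, F) < d(x, F \ S)}`, with extended distances so that `d(x, ∅) = ∞`.
This set is open and meets `F` in `S`. If `x` lies in finitely many of the sets `e(U a)`, a point
of `F` whose distance to `x` is less than all the numbers `d(x, F \ U a)` lies in all these `U a`;
this gives the nerve condition (`exists_mem_of_mem_nearExt`), and it passes to any smaller
extensions. Taking that point close to `x` as well shows that the family `e(U a)` is locally finite
at the points of `F` (`nearExt_finite_near`), hence on an open set `W ⊇ F`. By normality there is
an open `W'` with `F ⊆ W' ⊆ closure W' ⊆ W`, and the sets `e(U a) ∩ W'` form a family that is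
locally finite in all of `X`: points outside `closure W'` have a neighborhood missing every member.
-/

open Set Metric Topology

/-- The extension to `X` of a subset `S` of `F`: the points strictly closer to `F` than to
`F \ S`. Extended distances give the value `∞` to the distance to `F \ S` when `S = F`. -/
def nearExt {X : Type*} [PseudoEMetricSpace X] (F : Set X) (S : Set F) : Set X :=
  {x | infEDist x F < infEDist x (Subtype.val '' Sᶜ)}

theorem isOpen_nearExt {X : Type*} [PseudoEMetricSpace X] (F : Set X) (S : Set F) :
    IsOpen (nearExt F S) :=
  isOpen_lt continuous_infEDist continuous_infEDist

theorem preimage_nearExt {X : Type*} [PseudoEMetricSpace X] {F : Set X} (hF : IsClosed F)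
    {S : Set F} (hS : IsOpen S) : Subtype.val ⁻¹' nearExt F S = S := by
  ext ⟨x, hx⟩
  have hcl : IsClosed (Subtype.val '' Sᶜ : Set X) :=
    hF.isClosedEmbedding_subtypeVal.isClosedMap _ hS.isClosed_compl
  simp only [nearExt, mem_preimage, mem_ofPred_eq, infEDist_zero_of_mem hx, pos_iff_ne_zero, ne_eq,
    ← mem_iff_infEDist_zero_of_closed hcl]
  simp [hx]

theorem mem_of_edist_lt {X : Type*} [PseudoEMetricSpace X] {F : Set X} {S : Set F} {x : X} {p : F}
    (h : edist x p < infEDist x (Subtype.val '' Sᶜ)) : p ∈ S := by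
  by_contra hp
  exact absurd (infEDist_le_edist_of_mem (mem_image_of_mem _ hp)) (not_le.2 h)

theorem exists_mem_of_mem_nearExt {X A : Type*} [PseudoEMetricSpace X] {F : Set X}
    {U : A → Set F} {s : Finset A} (hs : s.Nonempty) {x : X} (hx : ∀ a ∈ s, x ∈ nearExt F (U a)) :
    ∃ p : F, ∀ a ∈ s, p ∈ U a := by
  have h : infEDist x F < s.inf' hs fun a => infEDist x (Subtype.val '' (U a)ᶜ) :=
    (Finset.lt_inf'_iff hs).2 hx
  obtain ⟨p, hp, hlt⟩ := infEDist_lt_iff.1 h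
  exact ⟨⟨p, hp⟩, fun a ha => mem_of_edist_lt (p := ⟨p, hp⟩) ((Finset.lt_inf'_iff hs).1 hlt a ha)⟩

theorem nearExt_finite_near {X A : Type*} [PseudoEMetricSpace X] {F : Set X}
    {U : A → Set F} (hU : LocallyFinite U) {x : X} (hx : x ∈ F) :
    ∃ t ∈ 𝓝 x, {a | (nearExt F (U a) ∩ t).Nonempty}.Finite := by
  obtain ⟨t, ht, hfin⟩ := hU ⟨x, hx⟩
  obtain ⟨r, hr, hrt⟩ := EMetric.mem_nhds_iff.1 ht
  refine ⟨eball x (r / 2), eball_mem_nhds x (ENNReal.half_pos hr.ne'), hfin.subset ?_⟩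
  rintro a ⟨y, hya, hyx⟩
  have hyx' : edist y x < r / 2 := hyx
  have h : infEDist y F < min (r / 2) (infEDist y (Subtype.val '' (U a)ᶜ)) :=
    lt_min ((infEDist_le_edist_of_mem hx).trans_lt hyx') hya
  obtain ⟨p, hp, hlt⟩ := infEDist_lt_iff.1 h
  obtain ⟨h1, h2⟩ := lt_min_iff.1 hlt
  refine ⟨⟨p, hp⟩, mem_of_edist_lt (p := ⟨p, hp⟩) h2, hrt ?_⟩
  change edist p x < r
  calc edist p x ≤ edist p y + edist y x := edist_triangle _ _ _
    _ < r / 2 + r / 2 := ENNReal.add_lt_add (by rwa [edist_comm]) hyx'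
    _ = r := ENNReal.add_halves r

/-- **Lemma 4 of the paper.** Let `F` be a closed subset of a metrizable space `X`, and let
`𝒰 = {U a | a ∈ A}` be a locally finite cover of `F` by sets that are open in `F`.  Then there
is a locally finite family `𝒱 = {V a | a ∈ A}` of open subsets of `X` such that `V a ∩ F = U a`
for every `a` and such that the nerves of `𝒰` and `𝒱` are naturally isomorphic, i.e. for every
nonempty finite `s ⊆ A` the intersection `⋂ a ∈ s, U a` is nonempty iff `⋂ a ∈ s, V a` is. -/
theorem extend_locally_finite_cover_with_same_nerve
    {X : Type*} [TopologicalSpace X] [TopologicalSpace.MetrizableSpace X]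
    (F : Set X) (hF : IsClosed F) {A : Type*} (U : A → Set F)
    (hUopen : ∀ a, IsOpen (U a)) (hUcov : (⋃ a, U a) = Set.univ)
    (hUlf : LocallyFinite U) :
    ∃ V : A → Set X, (∀ a, IsOpen (V a)) ∧ LocallyFinite V ∧
      (∀ a, Subtype.val ⁻¹' (V a) = U a) ∧
      ∀ s : Finset A, s.Nonempty →
        ((⋂ a ∈ s, U a).Nonempty ↔ (⋂ a ∈ s, V a).Nonempty) := by
  let _ := TopologicalSpace.metrizableSpaceMetric X
  -- `W` is the union of the open sets meeting only finitely many of the extensions.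
  let W : Set X := ⋃₀ {t | IsOpen t ∧ {a | (nearExt F (U a) ∩ t).Nonempty}.Finite}
  have hW : IsOpen W := isOpen_sUnion fun t ht => ht.1
  have hFW : F ⊆ W := fun x hx => by
    obtain ⟨t, ht, hfin⟩ := nearExt_finite_near hUlf hx
    obtain ⟨t', ht't, ht'o, hxt'⟩ := _root_.mem_nhds_iff.1 ht
    exact ⟨t', ⟨ht'o, hfin.subset fun a ha => ha.mono (inter_subset_inter_right _ ht't)⟩, hxt'⟩
  obtain ⟨W', hW', hFW', hcl⟩ := normal_exists_closure_subset hF hW hFW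
  have hres : ∀ a, Subtype.val ⁻¹' (nearExt F (U a) ∩ W') = U a := fun a => by
    rw [preimage_inter, preimage_nearExt hF (hUopen a)]
    exact inter_eq_left.2 fun p _ => hFW' p.2
  refine ⟨fun a => nearExt F (U a) ∩ W', fun a => (isOpen_nearExt F _).inter hW', fun x => ?_,
    hres, fun s hs => ⟨?_, ?_⟩⟩
  · by_cases hx : x ∈ closure W'
    · obtain ⟨t, ⟨hto, hfin⟩, hxt⟩ := hcl hx
      exact ⟨t, hto.mem_nhds hxt, hfin.subset fun a ha =>
        ha.mono (inter_subset_inter_left _ inter_subset_left)⟩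
    · refine ⟨(closure W')ᶜ, isClosed_closure.isOpen_compl.mem_nhds hx,
        finite_empty.subset ?_⟩
      rintro a ⟨y, hy, hy'⟩
      exact hy' (subset_closure hy.2)
  · rintro ⟨p, hp⟩
    refine ⟨p, mem_iInter₂.2 fun a ha => ?_⟩
    have h := mem_iInter₂.1 hp a ha
    rw [← hres a] at h
    exact h
  · rintro ⟨x, hx⟩
    obtain ⟨p, hp⟩ := exists_mem_of_mem_nearExt hs fun a ha => (mem_iInter₂.1 hx a ha).1
    exact ⟨p, mem_iInter₂.2 hp⟩
end

section
/- Let S₁ = (X_α, p_α^β, A) and S₂ = (Y_α, q_α^β, A) be two ω-projective systems of compact Hausdorff spaces over the same directed index set A, and let f be a continuous map from lim S₁ to lim S₂. If for every α ∈ A the projection p_α : lim S₁ → X_α is surjective, then there exist a cofinal closed subset B of A and a morphism (f_α)_{α∈B} : S₁|B → S₂|B of projective systems (continuous maps f_α : X_α → Y_α with f_α ∘ p_α^β = q_α^β ∘ f_β for α ≤ β in B) whose limit is f. -/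
/-!
Call `b` *good* if the `b`-th coordinate of `f u` depends only on the `b`-th coordinate of `u`, and
let `B` be the set of good indices. For `b ∈ B` the map `u ↦ (f u)_b` factors through the
projection `p_b : lim S₁ → X_b`, which is a quotient map (a continuous surjection from a compact
space onto a Hausdorff one), so the factor `g_b` is continuous; `g` is a morphism because the
projections are surjective.

`B` is closed because the point `(f u)_β` over a supremum `β` of a chain is determined by its
coordinates along the chain. For cofinality, the main point is `exists_determining_index`: a
continuous map `φ` from `lim S₁` to a compact metrizable space factors set-theoretically through
some `p_b`. Indeed the set of pairs with `φ u ≠ φ u'` is a countable union of compact sets, each of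
which is separated by a single coordinate, and countably many indices have a common upper bound.
Iterating this gives an increasing sequence `a = a₀ ≤ a₁ ≤ ⋯` such that the coordinate `a_{n+1}` of
`u` determines the coordinate `a_n` of `f u`; its supremum is good.
-/

noncomputable section

universe u v

/-- A projective (inverse) system of topological spaces over a preordered index set `A`:
spaces `X a` with continuous bonding maps `p h : X b → X a` for `h : a ≤ b`, compatible with
identities and composition. -/
structure ProjSys (A : Type u) [Preorder A] where
  X : A → Type v
  topo : ∀ a, TopologicalSpace (X a)
  p : ∀ {a b : A}, a ≤ b → X b → X a
  cont : ∀ {a b : A} (h : a ≤ b), @Continuous _ _ (topo b) (topo a) (p h)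
  p_id : ∀ (a : A) (x : X a), p (le_refl a) x = x
  p_comp : ∀ {a b c : A} (hab : a ≤ b) (hbc : b ≤ c) (x : X c),
    p hab (p hbc x) = p (hab.trans hbc) x

attribute [instance] ProjSys.topo

namespace ProjSys

variable {A : Type u} [Preorder A]

/-- The projective limit `lim S` of a projective system, with its canonical (subspace of the
product) topology; `fun u => u.1 a` is the projection `p_a : lim S → X a`. -/
abbrev lim (S : ProjSys.{u, v} A) :=
  {u : ∀ a, S.X a // ∀ (a b : A) (h : a ≤ b), S.p h (u b) = u a}

/-- The restriction `S|B` of a projective system to a subset `B` of the index set. -/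
def restrict (S : ProjSys.{u, v} A) (B : Set A) : ProjSys B where
  X b := S.X b
  topo b := S.topo b
  p {a b} h x := S.p (show (a : A) ≤ (b : A) from h) x
  cont h := S.cont _
  p_id a x := S.p_id a x
  p_comp hab hbc x := S.p_comp _ _ x

/-- The canonical map `X β → lim (S|B)` determined by an upper bound `β` of `B`. -/
def toLim (S : ProjSys.{u, v} A) (B : Set A) (β : A) (hβ : ∀ b ∈ B, b ≤ β) :
    S.X β → (S.restrict B).lim :=
  fun x => ⟨fun b => S.p (hβ b b.2) x, fun _ _ _ => S.p_comp _ _ x⟩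

/-- `S` is an ω-system: (*) every nonempty countable chain in `A` has a least upper bound;
(**) for every nonempty chain `B ⊆ A` with least upper bound `β`, the canonical map
`X β → lim (S|B)` is a homeomorphism; (***) every `X a` is second countable. -/
def IsOmega (S : ProjSys.{u, v} A) : Prop :=
  (∀ c : Set A, c.Countable → c.Nonempty → IsChain (· ≤ ·) c → ∃ β, IsLUB c β) ∧
  (∀ (B : Set A) (β : A), B.Nonempty → IsChain (· ≤ ·) B → ∀ h : IsLUB B β,
    IsHomeomorph (S.toLim B β fun b hb => h.1 hb)) ∧
  ∀ a, SecondCountableTopology (S.X a)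

end ProjSys

/-- `B` is a closed subset of the index set `A`: the least upper bound in `A` of any nonempty
chain of elements of `B` belongs to `B`. -/
def IsClosedIndexSet {A : Type u} [Preorder A] (B : Set A) : Prop :=
  ∀ c ⊆ B, c.Nonempty → IsChain (· ≤ ·) c → ∀ β, IsLUB c β → β ∈ B

end

namespace ProjSys

section

variable {A : Type u} [PartialOrder A]

lemma lim_compactSpace (S : ProjSys.{u, v} A) (hc : ∀ a, CompactSpace (S.X a))
    (hT : ∀ a, T2Space (S.X a)) : CompactSpace S.lim := by
  have hcl : IsClosed {u : ∀ a, S.X a | ∀ (a b : A) (h : a ≤ b), S.p h (u b) = u a} := by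
    simp only [Set.ofPred_forall]
    refine isClosed_iInter fun a => isClosed_iInter fun b => isClosed_iInter fun h => ?_
    exact isClosed_eq ((S.cont h).comp (continuous_apply b)) (continuous_apply a)
  exact isCompact_iff_compactSpace.mp hcl.isCompact

lemma continuous_coord (S : ProjSys.{u, v} A) (a : A) :
    Continuous fun u : S.lim => u.1 a :=
  (continuous_apply a).comp continuous_subtype_val

lemma coord_eq_of_le {S : ProjSys.{u, v} A} {a b : A} (h : a ≤ b) {x y : S.lim}
    (hxy : x.1 b = y.1 b) : x.1 a = y.1 a := by
  rw [← x.2 a b h, ← y.2 a b h, hxy]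

lemma IsOmega.exists_isLUB_range {S : ProjSys.{u, v} A} (hS : S.IsOmega) {c : ℕ → A}
    (hc : Monotone c) : ∃ β, IsLUB (Set.range c) β :=
  hS.1 _ (Set.countable_range c) (Set.range_nonempty c) hc.isChain_range

/-- Over the supremum of a chain, a point of the limit is determined by its coordinates along the
chain: this is the injectivity part of condition (**). -/
lemma IsOmega.coord_eq_of_isLUB {S : ProjSys.{u, v} A} (hS : S.IsOmega) {c : Set A} {β : A}
    (hne : c.Nonempty) (hc : IsChain (· ≤ ·) c) (hβ : IsLUB c β) {x y : S.lim}
    (h : ∀ b ∈ c, x.1 b = y.1 b) : x.1 β = y.1 β := by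
  apply (hS.2.1 c β hne hc hβ).injective
  apply Subtype.ext
  funext b
  change S.p _ (x.1 β) = S.p _ (y.1 β)
  rw [x.2, y.2]
  exact h b b.2

/-- Directedness replaces the sequence by an increasing one, which has a supremum by (*). -/
lemma IsOmega.exists_upper_bound [IsDirected A (· ≤ ·)] {S : ProjSys.{u, v} A} (hS : S.IsOmega)
    (b : ℕ → A) : ∃ β, ∀ n, b n ≤ β := by
  choose j hj₁ hj₂ using fun x y : A => exists_ge_ge x y
  let c : ℕ → A := fun n => Nat.rec (b 0) (fun n x => j x (b (n + 1))) n
  have hc : Monotone c := monotone_nat_of_le_succ fun n => hj₁ _ _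
  obtain ⟨β, hβ⟩ := hS.exists_isLUB_range hc
  have hbc : ∀ n, b n ≤ c n := fun n => by
    cases n with
    | zero => exact le_rfl
    | succ n => exact hj₂ _ _
  exact ⟨β, fun n => (hbc n).trans (hβ.1 ⟨n, rfl⟩)⟩

/-- A continuous map from the limit of an ω-system of compact Hausdorff spaces to a metrizable
space depends on one coordinate only. -/
lemma exists_determining_index [IsDirected A (· ≤ ·)] [Nonempty A] {S : ProjSys.{u, v} A}
    (hS : S.IsOmega) (hc : ∀ a, CompactSpace (S.X a)) (hT : ∀ a, T2Space (S.X a))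
    {Y : Type*} [TopologicalSpace Y] [TopologicalSpace.MetrizableSpace Y]
    {φ : S.lim → Y} (hφ : Continuous φ) :
    ∃ b, ∀ x y : S.lim, x.1 b = y.1 b → φ x = φ y := by
  let : MetricSpace Y := TopologicalSpace.metrizableSpaceMetric Y
  have := S.lim_compactSpace hc hT
  -- The pairs whose images are at distance at least `1 / (n + 1)` form a compact set.
  have key : ∀ n : ℕ, ∃ b, ∀ x y : S.lim,
      1 / ((n : ℝ) + 1) ≤ dist (φ x) (φ y) → x.1 b ≠ y.1 b := by
    intro n
    have hK : IsCompact {q : S.lim × S.lim | 1 / ((n : ℝ) + 1) ≤ dist (φ q.1) (φ q.2)} :=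
      (isClosed_le continuous_const
        ((hφ.comp continuous_fst).dist (hφ.comp continuous_snd))).isCompact
    obtain ⟨b, hb⟩ := hK.elim_directed_cover
      (fun b : A => {q : S.lim × S.lim | q.1.1 b ≠ q.2.1 b})
      (fun b => isOpen_ne_fun ((S.continuous_coord b).comp continuous_fst)
        ((S.continuous_coord b).comp continuous_snd))
      (by
        rintro ⟨x, y⟩ hq
        by_contra hcon
        simp only [Set.mem_iUnion, Set.mem_ofPred_eq, not_exists, not_not] at hcon
        have hxy : x = y := Subtype.ext (funext hcon)
        subst hxy
        simp only [Set.mem_ofPred_eq, dist_self] at hq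
        exact absurd hq (not_le.mpr Nat.one_div_pos_of_nat))
      (directed_of_isDirected_le fun a b hab q hq h => hq (coord_eq_of_le hab h))
    exact ⟨b, fun x y h => hb (a := (x, y)) h⟩
  choose b hb using key
  obtain ⟨β, hβ⟩ := hS.exists_upper_bound b
  refine ⟨β, fun x y hxy => ?_⟩
  by_contra hne
  obtain ⟨n, hn⟩ := exists_nat_one_div_lt (dist_pos.mpr hne)
  exact hb n x y hn.le (coord_eq_of_le (hβ n) hxy)

end

end ProjSys

/-- **Lemma 10 of the paper** (a particular case of Theorem 1.3.4 of Chigogidze's book).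
Let `S₁ = (X a, p, A)` and `S₂ = (Y a, q, A)` be two ω-projective systems of compact
Hausdorff spaces over the same directed index set `A`, and let `f : lim S₁ → lim S₂` be
continuous.  If every projection `p_a : lim S₁ → X a` is surjective, then there are a cofinal
closed subset `B ⊆ A` and a morphism `(g b)_{b ∈ B} : S₁|B → S₂|B` of projective systems
whose limit is `f` (under the canonical identification of `lim (Sᵢ|B)` with `lim Sᵢ`). -/
theorem spectral_theorem_for_omega_systems
    {A : Type u} [PartialOrder A] [IsDirected A (· ≤ ·)]
    (S₁ S₂ : ProjSys.{u, v} A) (h₁ : S₁.IsOmega) (h₂ : S₂.IsOmega)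
    (hcpt₁ : ∀ a, CompactSpace (S₁.X a)) (hT2₁ : ∀ a, T2Space (S₁.X a))
    (hcpt₂ : ∀ a, CompactSpace (S₂.X a)) (hT2₂ : ∀ a, T2Space (S₂.X a))
    (f : ContinuousMap S₁.lim S₂.lim)
    (hsurj : ∀ a : A, Function.Surjective fun u : S₁.lim => u.1 a) :
    ∃ B : Set A, (∀ a : A, ∃ b ∈ B, a ≤ b) ∧ IsClosedIndexSet B ∧
      ∃ g : ∀ b : B, ContinuousMap (S₁.X b) (S₂.X b),
        (∀ (b b' : B) (h : (b : A) ≤ (b' : A)) (x : S₁.X b'),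
          g b (S₁.p h x) = S₂.p h (g b' x)) ∧
        ∀ (u : S₁.lim) (b : B), g b (u.1 b) = (f u).1 b := by
  have := S₁.lim_compactSpace hcpt₁ hT2₁
  refine ⟨{b | ∀ x y : S₁.lim, x.1 b = y.1 b → (f x).1 b = (f y).1 b}, ?_, ?_, ?_⟩
  · intro a
    have : Nonempty A := ⟨a⟩
    have step : ∀ c : A, ∃ d, c ≤ d ∧
        ∀ x y : S₁.lim, x.1 d = y.1 d → (f x).1 c = (f y).1 c := by
      intro c
      have := h₂.2.2 c
      have := hcpt₂ c
      have := hT2₂ c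
      have : TopologicalSpace.MetrizableSpace (S₂.X c) :=
        TopologicalSpace.metrizableSpace_of_t3_secondCountable _
      obtain ⟨b, hb⟩ := ProjSys.exists_determining_index h₁ hcpt₁ hT2₁
        ((S₂.continuous_coord c).comp f.continuous)
      obtain ⟨d, hcd, hbd⟩ := exists_ge_ge c b
      exact ⟨d, hcd, fun x y h => hb x y (ProjSys.coord_eq_of_le hbd h)⟩
    choose s hs hdet using step
    let c : ℕ → A := fun n => s^[n] a
    have hsucc : ∀ n, c (n + 1) = s (c n) := fun n => Function.iterate_succ_apply' s n a
    have hc : Monotone c := monotone_nat_of_le_succ fun n => by rw [hsucc]; exact hs _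
    obtain ⟨β, hβ⟩ := h₁.exists_isLUB_range hc
    refine ⟨β, fun x y hxy => ?_, hβ.1 ⟨0, rfl⟩⟩
    refine h₂.coord_eq_of_isLUB (Set.range_nonempty c) hc.isChain_range hβ ?_
    rintro _ ⟨n, rfl⟩
    refine hdet _ x y (ProjSys.coord_eq_of_le ?_ hxy)
    rw [← hsucc]
    exact hβ.1 ⟨n + 1, rfl⟩
  · intro c hcB hne hc β hβ x y hxy
    exact h₂.coord_eq_of_isLUB hne hc hβ fun b hb =>
      hcB hb x y (ProjSys.coord_eq_of_le (hβ.1 hb) hxy)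
  · have hq : ∀ b : A, Topology.IsQuotientMap fun u : S₁.lim => u.1 b := fun b =>
      have := hT2₁ b
      (S₁.continuous_coord b).isClosedMap.isQuotientMap (S₁.continuous_coord b) (hsurj b)
    choose r hr using hsurj
    have hg : ∀ (b : {b | ∀ x y : S₁.lim, x.1 b = y.1 b → (f x).1 b = (f y).1 b})
        (w : S₁.lim), (f (r b (w.1 b))).1 (b : A) = (f w).1 b :=
      fun b w => b.2 _ _ (hr b (w.1 b))
    refine ⟨fun b => ⟨fun x => (f (r b x)).1 b, ?_⟩, ?_, fun w b => hg b w⟩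
    · refine (hq b).continuous_iff.mpr ?_
      exact ((S₂.continuous_coord b).comp f.continuous).congr fun w => (hg b w).symm
    · intro b b' h x
      obtain ⟨w, rfl⟩ : ∃ w : S₁.lim, w.1 b' = x := ⟨r b' x, hr b' x⟩
      change (f (r b (S₁.p h (w.1 b')))).1 b.1 = S₂.p h ((f (r b' (w.1 b'))).1 b'.1)
      rw [w.2 _ _ h, hg, hg, (f w).2 _ _ h]
end
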